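/- (Elliptic soliton solution of the lattice modified KP equation.) For generic α ∈ ℂ, set P_α = Φ_δ(α) = σ(α+δ)/(σ(δ)σ(α)), Q_α = Φ_ε(α), L_α = Φ_λ(α). Then the gauge variable 𝒱_α = Φ_ξ(α)·V_α satisfies, at every (n,m,h) ∈ ℤ³ where the denominators are nonzero, (P_α·𝒱̂_α − Q_α·𝒱̃_α)/𝒱̂̃_α + (Q_α·𝒱̄_α − L_α·𝒱̂_α)/𝒱̂̄_α + (L_α·𝒱̃_α − P_α·𝒱̄_α)/𝒱ّ̃̄_α = 0, where 𝒱̃_α, 𝒱̂_α, 𝒱̄_α denote 𝒱_α evaluated at (n+1,m,h), (n,m+1,h), (n,m,h+1), and 𝒱̂̃_α, 𝒱̂̄_α, 𝒱̃̄_α at (n+1,m+1,h), (n,m+1,h+1), (n+1,m,h+1). (The coefficients P_α, Q_α, L_α are the precise, gauge-exact values of p_α, q_α, l_α in the paper.) -/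

import Mathlib

open scoped BigOperators

noncomputable section

/-- A period lattice in `ℂ` spanned by two `ℝ`-independent periods. -/
structure EllLattice where
  ω₁ : ℂ
  ω₂ : ℂ
  indep : ∀ a b : ℝ, a • ω₁ + b • ω₂ = 0 → a = 0 ∧ b = 0

namespace EllLattice

/-- Membership in the lattice `Λ = ℤω₁ + ℤω₂`. -/
def mem (L : EllLattice) (z : ℂ) : Prop := ∃ m n : ℤ, z = m • L.ω₁ + n • L.ω₂

/-- The lattice point with integer coordinates `p = (m, n)`. -/
def per (L : EllLattice) (p : ℤ × ℤ) : ℂ := p.1 • L.ω₁ + p.2 • L.ω₂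

/-- The Weierstrass sigma function associated to the lattice, defined by its
Hadamard product over the nonzero lattice points. -/
def sigma (L : EllLattice) (z : ℂ) : ℂ :=
  z * ∏' p : {p : ℤ × ℤ // p ≠ 0},
      ((1 - z / L.per p.1) *
        Complex.exp (z / L.per p.1 + z ^ 2 / (2 * (L.per p.1) ^ 2)))

/-- The Weierstrass zeta function `ζ = σ′/σ`. -/
def zeta (L : EllLattice) (z : ℂ) : ℂ := deriv L.sigma z / L.sigma z

/-- The Weierstrass `℘`-function `℘ = −ζ′`. -/
def wp (L : EllLattice) (z : ℂ) : ℂ := - deriv L.zeta z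

/-- `Φ_ξ(κ) = σ(ξ+κ)/(σ(ξ)σ(κ))`. -/
def Phi (L : EllLattice) (ξ κ : ℂ) : ℂ := L.sigma (ξ + κ) / (L.sigma ξ * L.sigma κ)

/-- The Lamé function `Ψ_ξ(κ) = Φ_ξ(κ)·e^{−ζ(ξ)κ}`. -/
def Psi (L : EllLattice) (ξ κ : ℂ) : ℂ := L.Phi ξ κ * Complex.exp (-(L.zeta ξ) * κ)

/-- `η_δ(ξ) = ζ(ξ+δ) − ζ(ξ) − ζ(δ)`. -/
def eta (L : EllLattice) (δ ξ : ℂ) : ℂ := L.zeta (ξ + δ) - L.zeta ξ - L.zeta δ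

/-- `χ_{α,β}(ξ) = ζ(α) + ζ(β) + ζ(ξ) − ζ(ξ+α+β)`. -/
def chi (L : EllLattice) (α β ξ : ℂ) : ℂ :=
  L.zeta α + L.zeta β + L.zeta ξ - L.zeta (ξ + α + β)

end EllLattice

open Matrix

/-- All the data entering the elliptic (N,N′)-soliton solutions of the lattice KP system:
a period lattice, lattice parameters `δ, ε, λ`, a base point `ξ₀`, rapidity parameters
`κ_i, κ′_j`, initial plane-wave constants `ρ⁰_i, ν⁰_j` and a constant `N′×N` matrix `C`. -/
structure KPData (N N' : ℕ) where
  L : EllLattice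
  del : ℂ
  eps : ℂ
  lam : ℂ
  xi0 : ℂ
  κ : Fin N → ℂ
  κ' : Fin N' → ℂ
  ρ0 : Fin N → ℂ
  ν0 : Fin N' → ℂ
  C : Matrix (Fin N') (Fin N) ℂ

namespace KPData

variable {N N' : ℕ}

/-- `ξ = ξ₀ + nδ + mε + hλ`. -/
def xi (D : KPData N N') (n m h : ℤ) : ℂ :=
  D.xi0 + n • D.del + m • D.eps + h • D.lam

/-- The plane-wave factor `ρ_i(n,m,h)`. -/
def ρ (D : KPData N N') (i : Fin N) (n m h : ℤ) : ℂ :=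
  (Complex.exp (-(D.L.zeta D.del) * D.κ i) * D.L.Psi D.del (-(D.κ i))) ^ n *
  (Complex.exp (-(D.L.zeta D.eps) * D.κ i) * D.L.Psi D.eps (-(D.κ i))) ^ m *
  (Complex.exp (-(D.L.zeta D.lam) * D.κ i) * D.L.Psi D.lam (-(D.κ i))) ^ h *
  Complex.exp (D.L.zeta (D.xi n m h) * D.κ i) * D.ρ0 i

/-- The plane-wave factor `ν_j(n,m,h)`. -/
def ν (D : KPData N N') (j : Fin N') (n m h : ℤ) : ℂ :=
  (Complex.exp (D.L.zeta D.del * D.κ' j) * D.L.Psi D.del (D.κ' j)) ^ (-n) *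
  (Complex.exp (D.L.zeta D.eps * D.κ' j) * D.L.Psi D.eps (D.κ' j)) ^ (-m) *
  (Complex.exp (D.L.zeta D.lam * D.κ' j) * D.L.Psi D.lam (D.κ' j)) ^ (-h) *
  Complex.exp (D.L.zeta (D.xi n m h) * D.κ' j) * D.ν0 j

/-- The dressed elliptic Cauchy matrix `M_{ij} = ρ_i Ψ_ξ(κ_i + κ′_j) ν_j`. -/
def M (D : KPData N N') (n m h : ℤ) : Matrix (Fin N) (Fin N') ℂ :=
  Matrix.of fun i j => D.ρ i n m h * D.L.Psi (D.xi n m h) (D.κ i + D.κ' j) * D.ν j n m h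

/-- The column vector `r = (ρ_i Ψ_ξ(κ_i))_i`. -/
def r (D : KPData N N') (n m h : ℤ) : Fin N → ℂ :=
  fun i => D.ρ i n m h * D.L.Psi (D.xi n m h) (D.κ i)

/-- The column vector `s = (ν_j Ψ_ξ(κ′_j))_j`. -/
def s (D : KPData N N') (n m h : ℤ) : Fin N' → ℂ :=
  fun j => D.ν j n m h * D.L.Psi (D.xi n m h) (D.κ' j)

/-- The τ-function `τ = det(1 + MC)`. -/
def τ (D : KPData N N') (n m h : ℤ) : ℂ := (1 + D.M n m h * D.C).det

/-- The diagonal matrix `χ_{α,K}(ξ) = diag(χ_{α,κ_i}(ξ))`. -/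
def DK (D : KPData N N') (α : ℂ) (n m h : ℤ) : Matrix (Fin N) (Fin N) ℂ :=
  Matrix.diagonal fun i => D.L.chi α (D.κ i) (D.xi n m h)

/-- The diagonal matrix `χ_{β,K′}(ξ) = diag(χ_{β,κ′_j}(ξ))`. -/
def DK' (D : KPData N N') (β : ℂ) (n m h : ℤ) : Matrix (Fin N') (Fin N') ℂ :=
  Matrix.diagonal fun j => D.L.chi β (D.κ' j) (D.xi n m h)

/-- `W_β = 1 − sᵀ (χ_{β,K′}(ξ))⁻¹ C (1+MC)⁻¹ r`. -/
def W (D : KPData N N') (β : ℂ) (n m h : ℤ) : ℂ :=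
  1 - D.s n m h ⬝ᵥ ((D.DK' β n m h)⁻¹ *ᵥ (D.C *ᵥ ((1 + D.M n m h * D.C)⁻¹ *ᵥ D.r n m h)))

/-- `V_α = 1 − sᵀ (1+CM)⁻¹ C (χ_{α,K}(ξ))⁻¹ r`. -/
def V (D : KPData N N') (α : ℂ) (n m h : ℤ) : ℂ :=
  1 - D.s n m h ⬝ᵥ ((1 + D.C * D.M n m h)⁻¹ *ᵥ (D.C *ᵥ ((D.DK α n m h)⁻¹ *ᵥ D.r n m h)))

/-- `w₀ = sᵀ C (1+MC)⁻¹ r`. -/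
def w0 (D : KPData N N') (n m h : ℤ) : ℂ :=
  D.s n m h ⬝ᵥ (D.C *ᵥ ((1 + D.M n m h * D.C)⁻¹ *ᵥ D.r n m h))

/-- `w = ζ(ξ) − w₀ − nζ(δ) − mζ(ε) − hζ(λ)`. -/
def w (D : KPData N N') (n m h : ℤ) : ℂ :=
  D.L.zeta (D.xi n m h) - D.w0 n m h - n • D.L.zeta D.del - m • D.L.zeta D.eps -
    h • D.L.zeta D.lam

/-- `S_{β,α} = sᵀ (χ_{β,K′}(ξ))⁻¹ C (1+MC)⁻¹ (χ_{α,K}(ξ))⁻¹ r`. -/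
def S (D : KPData N N') (β α : ℂ) (n m h : ℤ) : ℂ :=
  D.s n m h ⬝ᵥ ((D.DK' β n m h)⁻¹ *ᵥ
    (D.C *ᵥ ((1 + D.M n m h * D.C)⁻¹ *ᵥ ((D.DK α n m h)⁻¹ *ᵥ D.r n m h))))

/-- `u_α = (1+MC)⁻¹ (χ_{α,K}(ξ))⁻¹ r`. -/
def u (D : KPData N N') (α : ℂ) (n m h : ℤ) : Fin N → ℂ :=
  (1 + D.M n m h * D.C)⁻¹ *ᵥ ((D.DK α n m h)⁻¹ *ᵥ D.r n m h)

/-- `u₀ = (1+MC)⁻¹ r`. -/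
def u0 (D : KPData N N') (n m h : ℤ) : Fin N → ℂ :=
  (1 + D.M n m h * D.C)⁻¹ *ᵥ D.r n m h

/-- the adjoint (row) vector `ᵗu_β = sᵀ (χ_{β,K′}(ξ))⁻¹ (1+CM)⁻¹`. -/
def tu (D : KPData N N') (β : ℂ) (n m h : ℤ) : Fin N' → ℂ :=
  (D.s n m h ᵥ* (D.DK' β n m h)⁻¹) ᵥ* (1 + D.C * D.M n m h)⁻¹

/-- the adjoint (row) vector `ᵗu₀ = sᵀ (1+CM)⁻¹`. -/
def tu0 (D : KPData N N') (n m h : ℤ) : Fin N' → ℂ :=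
  D.s n m h ᵥ* (1 + D.C * D.M n m h)⁻¹

/-- The gauge variable `𝒱_α = Φ_ξ(α)·V_α`. -/
def calV (D : KPData N N') (α : ℂ) (n m h : ℤ) : ℂ :=
  D.L.Phi (D.xi n m h) α * D.V α n m h

/-- The gauge variable `𝒲_β = Φ_ξ(β)·W_β`. -/
def calW (D : KPData N N') (β : ℂ) (n m h : ℤ) : ℂ :=
  D.L.Phi (D.xi n m h) β * D.W β n m h

/-- The Schwarzian variable `Z_{β,α} = Φ_ξ(α+β)·(1 − χ_{α,β}(ξ)·S_{β,α})`. -/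
def Z (D : KPData N N') (β α : ℂ) (n m h : ℤ) : ℂ :=
  D.L.Phi (D.xi n m h) (α + β) * (1 - D.L.chi α β (D.xi n m h) * D.S β α n m h)

/-- Genericity of the parameters (together with finitely many auxiliary points `extra`):
no nontrivial integer combination of `ξ₀, δ, ε, λ`, the rapidity parameters and the
auxiliary points lies on the lattice.  In particular all arguments of `σ` occurring in
the soliton solutions and their shifts lie outside `Λ`. -/
def Generic {P : ℕ} (D : KPData N N') (extra : Fin P → ℂ) : Prop :=
  ∀ (c0 cn cm ch : ℤ) (a : Fin N → ℤ) (b : Fin N' → ℤ) (e : Fin P → ℤ),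
    ¬ (c0 = 0 ∧ cn = 0 ∧ cm = 0 ∧ ch = 0 ∧ a = 0 ∧ b = 0 ∧ e = 0) →
    ¬ D.L.mem (c0 • D.xi0 + cn • D.del + cm • D.eps + ch • D.lam +
      (∑ i, a i • D.κ i) + (∑ j, b j • D.κ' j) + ∑ t, e t • extra t)

end KPData

/-! ### Elliptic function theory -/

namespace EllLattice

open Filter Topology

/-- The associated Mathlib period pair. -/
def pp (L : EllLattice) : PeriodPair where
  ω₁ := L.ω₁
  ω₂ := L.ω₂
  indep := by
    rw [LinearIndependent.pair_iff]
    exact L.indep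

lemma mem_iff (L : EllLattice) (z : ℂ) : L.mem z ↔ z ∈ L.pp.lattice := by
  rw [PeriodPair.mem_lattice]
  simp only [mem, pp, zsmul_eq_mul, eq_comm]

lemma per_eq (L : EllLattice) (p : ℤ × ℤ) : L.per p = (L.pp.latticeEquivProd.symm p : ℂ) := by
  rw [PeriodPair.latticeEquiv_symm_apply]
  simp [per, pp]

lemma per_mem (L : EllLattice) (p : ℤ × ℤ) : L.per p ∈ L.pp.lattice := by
  rw [per_eq]; exact Subtype.mem _

lemma per_ne_zero (L : EllLattice) {p : ℤ × ℤ} (hp : p ≠ 0) : L.per p ≠ 0 := by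
  rw [per_eq]
  simpa using hp

lemma summable_per (L : EllLattice) :
    Summable (fun p : {p : ℤ × ℤ // p ≠ 0} => ‖L.per p.1‖ ^ (-3 : ℝ)) := by
  have h := ZLattice.summable_norm_rpow L.pp.lattice (-3) (by simp; norm_num)
  have h2 := (L.pp.latticeEquivProd.symm.toEquiv.summable_iff).mpr h
  have h3 := h2.subtype {p | p ≠ 0}
  refine h3.congr fun p => ?_
  rw [per_eq]
  rfl

/-- The primary factor minus one. -/
def fac (L : EllLattice) (p : {p : ℤ × ℤ // p ≠ 0}) (z : ℂ) : ℂ :=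
  (1 - z / L.per p.1) *
        Complex.exp (z / L.per p.1 + z ^ 2 / (2 * (L.per p.1) ^ 2))

lemma factor_bound (u : ℂ) (hu : ‖u‖ ≤ 1 / 2) :
    ‖(1 - u) * Complex.exp (u + u ^ 2 / 2) - 1‖ ≤ 2 * ‖u‖ ^ 3 := by
  have h1 : (1 : ℂ) - u ≠ 0 := by
    intro h
    have : u = 1 := by linear_combination -h
    rw [this] at hu
    norm_num at hu
  have hT := Complex.norm_log_sub_logTaylor_le 2 (z := -u) (by rw [norm_neg]; linarith)
  have e : Complex.logTaylor (2 + 1) (-u) = -u - u ^ 2 / 2 := by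
    simp [Complex.logTaylor, Finset.sum_range_succ]
    ring
  rw [e, norm_neg] at hT
  have e2 : (1 - u) * Complex.exp (u + u ^ 2 / 2)
      = Complex.exp (Complex.log (1 + -u) - (-u - u ^ 2 / 2)) := by
    rw [show Complex.log (1 + -u) - (-u - u ^ 2 / 2) = Complex.log (1 - u) + (u + u ^ 2 / 2) by
      rw [← sub_eq_add_neg]; ring, Complex.exp_add (Complex.log (1 - u)), Complex.exp_log h1]
  rw [e2]
  set X := Complex.log (1 + -u) - (-u - u ^ 2 / 2)
  have hn : 0 ≤ ‖u‖ := norm_nonneg u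
  have hX : ‖X‖ ≤ ‖u‖ ^ 3 := by
    refine hT.trans ?_
    have : (1 - ‖u‖)⁻¹ ≤ 2 := by
      rw [inv_le_comm₀ (by linarith) (by norm_num)]
      linarith
    have h3 : 0 ≤ ‖u‖ ^ 3 := by positivity
    norm_num
    nlinarith
  have hX1 : ‖X‖ ≤ 1 := by
    refine hX.trans ?_
    exact pow_le_one₀ hn (by linarith)
  refine (Complex.norm_exp_sub_one_le hX1).trans ?_
  linarith

lemma fac_bound (L : EllLattice) (r : ℝ) (hr : 0 < r) :
    ∀ᶠ p : {p : ℤ × ℤ // p ≠ 0} in cofinite, ∀ z ∈ Metric.ball (0 : ℂ) r,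
      ‖L.fac p z - 1‖ ≤ 2 * r ^ 3 * ‖L.per p.1‖ ^ (-3 : ℝ) := by
  have hs := L.summable_per.tendsto_cofinite_zero
  have he := hs.eventually_lt_const (show (0 : ℝ) < (2 * r) ^ (-3 : ℝ) by positivity)
  filter_upwards [he] with p hp z hz
  have hw := L.per_ne_zero p.2
  have hw0 : 0 < ‖L.per p.1‖ := norm_pos_iff.mpr hw
  have h2 : 2 * r ≤ ‖L.per p.1‖ := by
    by_contra! hlt
    have := Real.rpow_le_rpow_of_nonpos hw0 hlt.le (show (-3 : ℝ) ≤ 0 by norm_num)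
    linarith
  have hz' : ‖z‖ < r := by simpa using hz
  have hu : ‖z / L.per p.1‖ ≤ 1 / 2 := by
    rw [norm_div, div_le_iff₀ hw0]
    linarith
  have hb := factor_bound _ hu
  have e : L.fac p z = (1 - z / L.per p.1) *
      Complex.exp (z / L.per p.1 + (z / L.per p.1) ^ 2 / 2) := by
    unfold fac
    congr 2
    field_simp
  rw [e]
  refine hb.trans ?_
  rw [norm_div, div_pow]
  have e3 : ‖L.per p.1‖ ^ (-3 : ℝ) = (‖L.per p.1‖ ^ 3)⁻¹ := by
    rw [Real.rpow_neg hw0.le]; norm_cast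
  rw [e3, div_eq_mul_inv, mul_assoc 2 (r ^ 3)]
  gcongr

lemma fac_differentiable (L : EllLattice) (p : {p : ℤ × ℤ // p ≠ 0}) :
    Differentiable ℂ (L.fac p) := by
  unfold fac
  fun_prop

lemma fac_ne_zero (L : EllLattice) (p : {p : ℤ × ℤ // p ≠ 0}) {z : ℂ} (hz : z ∉ L.pp.lattice) :
    L.fac p z ≠ 0 := by
  unfold fac
  refine mul_ne_zero ?_ (Complex.exp_ne_zero _)
  intro h
  apply hz
  have hw := L.per_ne_zero p.2
  have : z = L.per p.1 := by
    field_simp at h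
    linear_combination -h
  rw [this]; exact L.per_mem _

/-- the product part of sigma -/
def gg (L : EllLattice) (z : ℂ) : ℂ := ∏' p, L.fac p z

lemma sigma_eq (L : EllLattice) (z : ℂ) : L.sigma z = z * L.gg z := rfl

lemma hasProd_gg (L : EllLattice) :
    HasProdLocallyUniformlyOn L.fac L.gg Set.univ := by
  apply hasProdLocallyUniformlyOn_of_forall_compact isOpen_univ
  intro K _ hK
  obtain ⟨r, hr⟩ := hK.isBounded.subset_ball (0 : ℂ)
  have h := Summable.hasProdUniformlyOn_one_add (f := fun p z => L.fac p z - 1) hK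
    (u := fun p => 2 * (max r 1) ^ 3 * ‖L.per p.1‖ ^ (-3 : ℝ))
    (L.summable_per.mul_left _) ?_ ?_
  · simpa [gg] using! h
  · filter_upwards [L.fac_bound (max r 1) (by positivity)] with p hp z hz
    exact hp z (Metric.ball_subset_ball (le_max_left _ _) (hr hz))
  · intro p
    exact ((L.fac_differentiable p).sub_const 1).continuous.continuousOn

lemma gg_ne_zero (L : EllLattice) {z : ℂ} (hz : z ∉ L.pp.lattice) : L.gg z ≠ 0 := by
  have h := tprod_one_add_ne_zero_of_summable (f := fun p => L.fac p z - 1)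
    (fun p => by simpa using L.fac_ne_zero p hz) ?_
  · simpa [gg] using h
  · refine Summable.of_norm_bounded_eventually
      (g := fun p => 2 * (‖z‖ + 1) ^ 3 * ‖L.per p.1‖ ^ (-3 : ℝ)) (L.summable_per.mul_left _) ?_
    filter_upwards [L.fac_bound (‖z‖ + 1) (by positivity)] with p hp
    simpa using hp z (by simp)

lemma tendsto_gg (L : EllLattice) :
    TendstoLocallyUniformlyOn (fun (s : Finset {p : ℤ × ℤ // p ≠ 0}) z => ∏ p ∈ s, L.fac p z)
      L.gg atTop Set.univ :=
  hasProdLocallyUniformlyOn_iff_tendstoLocallyUniformlyOn.mp L.hasProd_gg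

lemma prod_differentiable (L : EllLattice) (s : Finset {p : ℤ × ℤ // p ≠ 0}) :
    Differentiable ℂ (fun z => ∏ p ∈ s, L.fac p z) := by
  refine Differentiable.fun_finsetProd fun p _ => L.fac_differentiable p

lemma gg_differentiable (L : EllLattice) : Differentiable ℂ L.gg := by
  rw [← differentiableOn_univ]
  exact L.tendsto_gg.differentiableOn
    (.of_forall fun s => (L.prod_differentiable s).differentiableOn) isOpen_univ

lemma sigma_differentiable (L : EllLattice) : Differentiable ℂ L.sigma := by
  have : L.sigma = fun z => z * L.gg z := rfl
  rw [this]
  exact differentiable_id.mul L.gg_differentiable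

lemma sigma_ne_zero (L : EllLattice) {z : ℂ} (hz : z ∉ L.pp.lattice) : L.sigma z ≠ 0 := by
  rw [sigma_eq]
  refine mul_ne_zero ?_ (L.gg_ne_zero hz)
  rintro rfl
  exact hz (zero_mem _)

lemma sigma_zero_of_mem (L : EllLattice) {z : ℂ} (hz : z ∈ L.pp.lattice) : L.sigma z = 0 := by
  by_cases h0 : z = 0
  · simp [sigma_eq, h0]
  rw [sigma_eq]
  have hz' : z = L.per (L.pp.latticeEquivProd ⟨z, hz⟩) := by
    rw [per_eq]; simp
  set p := L.pp.latticeEquivProd ⟨z, hz⟩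
  have hp : p ≠ 0 := by
    intro h
    rw [h] at hz'
    apply h0; rw [hz']; simp [per]
  have : L.gg z = 0 := by
    refine tprod_of_exists_eq_zero ⟨⟨p, hp⟩, ?_⟩
    unfold fac
    simp only
    rw [← hz', div_self h0]
    simp
  rw [this, mul_zero]

lemma gg_zero (L : EllLattice) : L.gg 0 = 1 := by
  simp [gg, fac]

lemma deriv_sigma_zero (L : EllLattice) : deriv L.sigma 0 = 1 := by
  have : HasDerivAt (fun z => z * L.gg z) (1 * L.gg 0 + 0 * deriv L.gg 0) 0 :=
    (hasDerivAt_id (0 : ℂ)).mul (L.gg_differentiable 0).hasDerivAt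
  have h2 : HasDerivAt L.sigma (1 * L.gg 0 + 0 * deriv L.gg 0) 0 := this
  rw [h2.deriv, gg_zero]; simp

lemma per_neg (L : EllLattice) (p : ℤ × ℤ) : L.per (-p) = - L.per p := by
  simp [per]; ring

/-- Negation on nonzero indices. -/
def negE : {p : ℤ × ℤ // p ≠ 0} ≃ {p : ℤ × ℤ // p ≠ 0} where
  toFun p := ⟨-p.1, neg_ne_zero.mpr p.2⟩
  invFun p := ⟨-p.1, neg_ne_zero.mpr p.2⟩
  left_inv p := by simp
  right_inv p := by simp

lemma sigma_neg (L : EllLattice) (z : ℂ) : L.sigma (-z) = - L.sigma z := by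
  rw [sigma_eq, sigma_eq]
  have : L.gg (-z) = L.gg z := by
    unfold gg
    rw [← negE.tprod_eq]
    refine tprod_congr fun p => ?_
    unfold fac negE
    simp only [Equiv.coe_fn_mk, per_neg]
    simp
  rw [this]; ring

lemma zeta_neg (L : EllLattice) (z : ℂ) : L.zeta (-z) = - L.zeta z := by
  unfold zeta
  have h : deriv L.sigma (-z) = deriv L.sigma z := by
    have h1 : deriv (fun x => L.sigma (-x)) z = deriv (fun x => - L.sigma x) z := by
      congr 1; funext x; exact L.sigma_neg x
    rw [deriv_comp_neg, deriv.fun_neg] at h1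
    simpa using h1
  rw [h, sigma_neg, div_neg]

end EllLattice

namespace EllLattice

open Filter Topology

lemma hasDerivAt_logDeriv_fac (L : EllLattice) (p : {p : ℤ × ℤ // p ≠ 0}) {z : ℂ}
    (hz : z ∉ L.pp.lattice) :
    HasDerivAt (logDeriv (L.fac p)) (-(1 / (z - L.per p.1) ^ 2 - 1 / (L.per p.1) ^ 2)) z := by
  have hw := L.per_ne_zero p.2
  have hne : ∀ x, x ∉ L.pp.lattice → x - L.per p.1 ≠ 0 := by
    intro x hx h
    apply hx
    rw [sub_eq_zero.mp h]; exact L.per_mem _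
  have key : ∀ x, x ∉ L.pp.lattice → logDeriv (L.fac p) x =
      1 / (x - L.per p.1) + 1 / L.per p.1 + x / (L.per p.1) ^ 2 := by
    intro x hx
    have hd : HasDerivAt (L.fac p)
        ((-(1 / L.per p.1)) * Complex.exp (x / L.per p.1 + x ^ 2 / (2 * (L.per p.1) ^ 2)) +
        (1 - x / L.per p.1) * (Complex.exp (x / L.per p.1 + x ^ 2 / (2 * (L.per p.1) ^ 2)) *
          (1 / L.per p.1 + (2 * x ^ (2 - 1) * 1) / (2 * (L.per p.1) ^ 2)))) x := by
      have h1 : HasDerivAt (fun z : ℂ => 1 - z / L.per p.1) (-(1 / L.per p.1)) x :=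
        ((hasDerivAt_id x).div_const _).const_sub 1
      have h2 : HasDerivAt (fun z : ℂ => z / L.per p.1 + z ^ 2 / (2 * (L.per p.1) ^ 2))
          (1 / L.per p.1 + (2 * x ^ (2 - 1) * 1) / (2 * (L.per p.1) ^ 2)) x :=
        ((hasDerivAt_id x).div_const _).add (((hasDerivAt_id x).pow 2).div_const _)
      exact h1.mul h2.cexp
    rw [logDeriv_apply, hd.deriv]
    have h3 := L.fac_ne_zero p hx
    rw [div_eq_iff h3]
    have h4 := hne x hx
    unfold fac
    field_simp
    ring
  have hev : logDeriv (L.fac p) =ᶠ[𝓝 z]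
      fun x => 1 / (x - L.per p.1) + 1 / L.per p.1 + x / (L.per p.1) ^ 2 := by
    filter_upwards [L.pp.isClosed_lattice.isOpen_compl.mem_nhds hz] with x hx
    exact key x hx
  refine HasDerivAt.congr_of_eventuallyEq ?_ hev
  have h4 := hne z hz
  have h1 : HasDerivAt (fun x : ℂ => 1 / (x - L.per p.1))
      ((0 * (z - L.per p.1) - 1 * 1) / (z - L.per p.1) ^ 2) z :=
    (hasDerivAt_const z (1 : ℂ)).div ((hasDerivAt_id z).sub_const _) h4
  have h2 := (h1.add_const (1 / L.per p.1)).add ((hasDerivAt_id z).div_const ((L.per p.1) ^ 2))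
  convert! h2 using 1
  field_simp
  ring

open PeriodPair in
lemma hasSum_wpp (L : EllLattice) (z : ℂ) :
    HasSum (fun p : {p : ℤ × ℤ // p ≠ 0} => 1 / (z - L.per p.1) ^ 2 - 1 / (L.per p.1) ^ 2)
      (L.pp.weierstrassP z - 1 / z ^ 2) := by
  have h := L.pp.hasSum_weierstrassP z
  have h2 := (L.pp.latticeEquivProd.symm.toEquiv.hasSum_iff).mpr h
  have h3 := (hasSum_subtype_iff_indicator (s := {p : ℤ × ℤ | p ≠ 0})
    (f := fun p : ℤ × ℤ => 1 / (z - L.per p) ^ 2 - 1 / (L.per p) ^ 2)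
    (a := L.pp.weierstrassP z - 1 / z ^ 2)).mpr ?_
  · exact h3
  have h4 := h2.sub (hasSum_ite_eq (0 : ℤ × ℤ) (1 / z ^ 2))
  convert! h4 using 1
  funext p
  by_cases hp : p = 0
  · simp [hp]
  · simp [hp, per_eq]

lemma hasDerivAt_logDeriv_gg (L : EllLattice) {z : ℂ} (hz : z ∉ L.pp.lattice) :
    HasDerivAt (logDeriv L.gg) (1 / z ^ 2 - L.pp.weierstrassP z) z := by
  set P : Finset {p : ℤ × ℤ // p ≠ 0} → ℂ → ℂ := fun s z => ∏ p ∈ s, L.fac p z with hP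
  have hdP : ∀ s, Differentiable ℂ (P s) := L.prod_differentiable
  have t0 : TendstoLocallyUniformlyOn P L.gg atTop Set.univ := L.tendsto_gg
  have t1 := t0.deriv (.of_forall fun s => (hdP s).differentiableOn) isOpen_univ
  have t2 := t1.deriv (.of_forall fun s => (hdP s).deriv.differentiableOn) isOpen_univ
  have p0 := t0.tendsto_at (Set.mem_univ z)
  have p1 := t1.tendsto_at (Set.mem_univ z)
  have p2 := t2.tendsto_at (Set.mem_univ z)
  simp only [Function.comp_apply] at p1 p2
  have hg := L.gg_ne_zero hz
  have gen : ∀ f : ℂ → ℂ, Differentiable ℂ f → f z ≠ 0 →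
      HasDerivAt (logDeriv f) ((deriv (deriv f) z * f z - deriv f z * deriv f z) / (f z) ^ 2) z := by
    intro f hf hz
    exact (hf.deriv z).hasDerivAt.div (hf z).hasDerivAt hz
  have lim : Tendsto (fun s => (deriv (deriv (P s)) z * P s z - deriv (P s) z * deriv (P s) z)
      / (P s z) ^ 2) atTop
      (𝓝 ((deriv (deriv L.gg) z * L.gg z - deriv L.gg z * deriv L.gg z) / (L.gg z) ^ 2)) :=
    ((p2.mul p0).sub (p1.mul p1)).div (p0.pow 2) (pow_ne_zero 2 hg)
  have hs := (L.hasSum_wpp z).neg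
  have heq : ∀ s, (deriv (deriv (P s)) z * P s z - deriv (P s) z * deriv (P s) z)
      / (P s z) ^ 2 = ∑ p ∈ s, -(1 / (z - L.per p.1) ^ 2 - 1 / (L.per p.1) ^ 2) := by
    intro s
    have hne : P s z ≠ 0 := Finset.prod_ne_zero_iff.mpr fun p _ => L.fac_ne_zero p hz
    refine (gen (P s) (hdP s) hne).unique ?_
    have hsum : HasDerivAt (fun x => ∑ p ∈ s, logDeriv (L.fac p) x)
        (∑ p ∈ s, -(1 / (z - L.per p.1) ^ 2 - 1 / (L.per p.1) ^ 2)) z :=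
      HasDerivAt.fun_sum fun p _ => L.hasDerivAt_logDeriv_fac p hz
    refine hsum.congr_of_eventuallyEq ?_
    filter_upwards [L.pp.isClosed_lattice.isOpen_compl.mem_nhds hz] with x hx
    exact logDeriv_prod (fun p _ => L.fac_ne_zero p hx) (fun p _ => L.fac_differentiable p x)
  have hu : (deriv (deriv L.gg) z * L.gg z - deriv L.gg z * deriv L.gg z) / (L.gg z) ^ 2
      = -(L.pp.weierstrassP z - 1 / z ^ 2) := by
    refine tendsto_nhds_unique lim ?_
    simp only [heq]
    exact hs
  have := gen L.gg L.gg_differentiable hg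
  rw [hu] at this
  convert this using 1
  ring

lemma hasDerivAt_zeta (L : EllLattice) {z : ℂ} (hz : z ∉ L.pp.lattice) :
    HasDerivAt L.zeta (- L.pp.weierstrassP z) z := by
  have hz0 : z ≠ 0 := by rintro rfl; exact hz (zero_mem _)
  have h1 : HasDerivAt (fun x : ℂ => 1 / x) ((0 * z - 1 * 1) / z ^ 2) z :=
    (hasDerivAt_const z (1 : ℂ)).div (hasDerivAt_id z) hz0
  have h2 := h1.add (L.hasDerivAt_logDeriv_gg hz)
  have hev : L.zeta =ᶠ[𝓝 z] ((fun x : ℂ => 1 / x) + logDeriv L.gg) := by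
    filter_upwards [L.pp.isClosed_lattice.isOpen_compl.mem_nhds hz] with x hx
    have hx0 : x ≠ 0 := by rintro rfl; exact hx (zero_mem _)
    have e : L.zeta x = logDeriv (fun z => z * L.gg z) x := rfl
    rw [e, logDeriv_mul (f := fun z => z) x hx0 (L.gg_ne_zero hx) differentiableAt_id
      (L.gg_differentiable x)]
    simp [logDeriv_apply]
  have h3 := h2.congr_of_eventuallyEq hev
  have e : (0 * z - 1 * 1) / z ^ 2 + (1 / z ^ 2 - L.pp.weierstrassP z)
      = -L.pp.weierstrassP z := by ring
  rw [e] at h3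
  exact h3

lemma compl_conn (L : EllLattice) : IsPreconnected ((L.pp.lattice : Set ℂ)ᶜ) := by
  refine (Set.Countable.isConnected_compl_of_one_lt_rank ?_ ?_).isPreconnected
  · rw [Complex.rank_real_complex]; norm_num
  · have : Countable L.pp.lattice := L.pp.latticeEquivProd.toEquiv.countable_iff.mpr inferInstance
    exact Set.to_countable _

lemma compl_nonempty (L : EllLattice) : ∃ z, z ∉ L.pp.lattice :=
  ⟨_, L.pp.ω₁_div_two_notMem_lattice⟩

lemma const_of_deriv (L : EllLattice) (f : ℂ → ℂ)
    (hf : ∀ z, z ∉ L.pp.lattice → HasDerivAt f 0 z) :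
    ∃ c, ∀ z, z ∉ L.pp.lattice → f z = c := by
  obtain ⟨z0, hz0⟩ := L.compl_nonempty
  refine ⟨f z0, fun z hz => ?_⟩
  refine IsOpen.is_const_of_deriv_eq_zero (s := (L.pp.lattice : Set ℂ)ᶜ)
    L.pp.isClosed_lattice.isOpen_compl L.compl_conn
    (fun x hx => (hf x hx).differentiableAt.differentiableWithinAt) (fun x hx => (hf x hx).deriv)
    hz hz0

lemma add_mem_iff (L : EllLattice) {w : ℂ} (hw : w ∈ L.pp.lattice) (z : ℂ) :
    z + w ∈ L.pp.lattice ↔ z ∈ L.pp.lattice :=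
  L.pp.lattice.toAddSubgroup.add_mem_cancel_right hw

lemma zeta_quasi (L : EllLattice) {w : ℂ} (hw : w ∈ L.pp.lattice) :
    ∃ η, ∀ z, z ∉ L.pp.lattice → L.zeta (z + w) = L.zeta z + η := by
  obtain ⟨η, h⟩ := L.const_of_deriv (fun z => L.zeta (z + w) - L.zeta z) (fun z hz => by
    have h1 : z + w ∉ L.pp.lattice := by rwa [L.add_mem_iff hw]
    have h2 := ((L.hasDerivAt_zeta h1).comp_add_const z w).sub (L.hasDerivAt_zeta hz)
    rw [L.pp.weierstrassP_add_coe z ⟨w, hw⟩] at h2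
    rw [sub_self] at h2
    exact h2)
  exact ⟨η, fun z hz => by rw [← h z hz]; ring⟩

lemma hasDerivAt_sigma (L : EllLattice) {z : ℂ} (hz : z ∉ L.pp.lattice) :
    HasDerivAt L.sigma (L.zeta z * L.sigma z) z := by
  have := (L.sigma_differentiable z).hasDerivAt
  unfold zeta
  rwa [div_mul_cancel₀ _ (L.sigma_ne_zero hz)]

lemma sigma_quasi (L : EllLattice) {w : ℂ} (hw : w ∈ L.pp.lattice) :
    ∃ η c, c ≠ 0 ∧ (∀ z, z ∉ L.pp.lattice → L.zeta (z + w) = L.zeta z + η) ∧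
      (∀ z, L.sigma (z + w) = c * Complex.exp (η * z) * L.sigma z) := by
  obtain ⟨η, hη⟩ := L.zeta_quasi hw
  obtain ⟨c, hc⟩ := L.const_of_deriv
    (fun z => L.sigma (z + w) * Complex.exp (-η * z) / L.sigma z) (fun z hz => by
      have h1 : z + w ∉ L.pp.lattice := by rwa [L.add_mem_iff hw]
      have h2 := (L.hasDerivAt_sigma h1).comp_add_const z w
      have h3 : HasDerivAt (fun z : ℂ => Complex.exp (-η * z)) (Complex.exp (-η * z) * (-η * 1)) z :=
        ((hasDerivAt_id z).const_mul (-η)).cexp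
      have h4 := (h2.mul h3).div (L.hasDerivAt_sigma hz) (L.sigma_ne_zero hz)
      rw [hη z hz] at h4
      convert! h4 using 1
      rw [eq_comm, div_eq_zero_iff]
      left
      simp only [Pi.mul_apply]
      ring)
  have hq : ∀ z, z ∉ L.pp.lattice → L.sigma (z + w) = c * Complex.exp (η * z) * L.sigma z := by
    intro z hz
    rw [← hc z hz]
    have h1 := L.sigma_ne_zero hz
    have : Complex.exp (-η * z) * Complex.exp (η * z) = 1 := by
      rw [← Complex.exp_add]; simp
    rw [mul_assoc, div_mul_eq_mul_div, eq_div_iff h1]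
    linear_combination -L.sigma (z + w) * L.sigma z * this
  refine ⟨η, c, ?_, hη, ?_⟩
  · rintro rfl
    obtain ⟨z, hz⟩ := L.compl_nonempty
    have h1 : z + w ∉ L.pp.lattice := by rwa [L.add_mem_iff hw]
    apply L.sigma_ne_zero h1
    rw [hq z hz]; ring
  · intro z
    by_cases hz : z ∈ L.pp.lattice
    · rw [L.sigma_zero_of_mem hz, L.sigma_zero_of_mem ((L.add_mem_iff hw z).mpr hz)]; ring
    · exact hq z hz

lemma deriv_sigma_add (L : EllLattice) {w c η : ℂ}
    (h : ∀ z, L.sigma (z + w) = c * Complex.exp (η * z) * L.sigma z) (z : ℂ) :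
    deriv L.sigma (z + w) = c * Complex.exp (η * z) * (deriv L.sigma z + η * L.sigma z) := by
  have h1 : HasDerivAt (fun z => L.sigma (z + w)) (deriv L.sigma (z + w)) z :=
    (L.sigma_differentiable _).hasDerivAt.comp_add_const z w
  have h3 : HasDerivAt (fun z : ℂ => c * Complex.exp (η * z))
      (c * (Complex.exp (η * z) * (η * 1))) z :=
    (((hasDerivAt_id z).const_mul η).cexp).const_mul c
  have h2 := h3.mul (L.sigma_differentiable z).hasDerivAt
  have h4 : (fun z => L.sigma (z + w)) = ((fun z => c * Complex.exp (η * z)) * L.sigma) := by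
    funext x; exact h x
  rw [h4] at h1
  rw [h1.unique h2]
  ring

end EllLattice

namespace EllLattice

open Filter Topology

lemma liouville (L : EllLattice) (G D : ℂ → ℂ) (hG : Differentiable ℂ G) (hD : Differentiable ℂ D)
    (hper : ∀ w ∈ L.pp.lattice, ∃ m : ℂ → ℂ, ∀ z, m z ≠ 0 ∧ G (z + w) = m z * G z ∧
      D (z + w) = m z * D z)
    (hz : ∀ z, D z = 0 → G z = 0 ∧ deriv D z ≠ 0)
    (z1 : ℂ) (h1D : D z1 ≠ 0) (h1G : G z1 = 0) (z : ℂ) : G z = 0 := by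
  set H : ℂ → ℂ := fun z => G z / D z with hH
  set R : ℂ → ℂ := fun z => limUnder (𝓝[≠] z) H with hR
  have hHper : ∀ w ∈ L.pp.lattice, ∀ z, H (z + w) = H z := by
    intro w hw z
    obtain ⟨m, hm⟩ := hper w hw
    obtain ⟨h0, hg, hd⟩ := hm z
    simp only [hH, hg, hd]
    rw [mul_div_mul_left _ _ h0]
  have hloc : ∀ z0, ∃ h : ℂ → ℂ, AnalyticAt ℂ h z0 ∧ H =ᶠ[𝓝[≠] z0] h := by
    intro z0
    by_cases h0 : D z0 = 0
    · obtain ⟨g0, d0⟩ := hz z0 h0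
      refine ⟨fun z => dslope G z0 z / dslope D z0 z, ?_, ?_⟩
      · have dG : Differentiable ℂ (dslope G z0) := by
          rw [← differentiableOn_univ]
          exact (Complex.differentiableOn_dslope univ_mem).mpr hG.differentiableOn
        have dD : Differentiable ℂ (dslope D z0) := by
          rw [← differentiableOn_univ]
          exact (Complex.differentiableOn_dslope univ_mem).mpr hD.differentiableOn
        exact (dG.analyticAt z0).div (dD.analyticAt z0) (by simpa using d0)
      · filter_upwards [self_mem_nhdsWithin] with x hx
        have hx' : x ≠ z0 := hx
        have hs : x - z0 ≠ 0 := sub_ne_zero.mpr hx'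
        rw [dslope_of_ne _ hx', dslope_of_ne _ hx', slope_def_field, slope_def_field, g0, h0]
        simp only [hH, sub_zero]
        rw [div_div_div_cancel_right₀ hs]
    · exact ⟨H, (hG.analyticAt z0).div (hD.analyticAt z0) h0, EventuallyEq.rfl⟩
  have hRloc : ∀ z0 h, AnalyticAt ℂ h z0 → H =ᶠ[𝓝[≠] z0] h → R =ᶠ[𝓝 z0] h := by
    intro z0 h ha he
    have he2 : ∀ᶠ x in 𝓝 z0, H =ᶠ[𝓝[≠] x] h := by
      rw [EventuallyEq, eventually_nhdsWithin_iff] at he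
      have h3 := he.eventually_nhds
      have hself : H =ᶠ[𝓝[≠] z0] h := by
        rw [EventuallyEq, eventually_nhdsWithin_iff]; exact he
      filter_upwards [h3] with x hx
      by_cases hxz : x = z0
      · rw [hxz]; exact hself
      · have : ∀ᶠ y in 𝓝 x, y ≠ z0 := isOpen_ne.mem_nhds hxz
        refine Filter.Eventually.filter_mono nhdsWithin_le_nhds ?_
        filter_upwards [hx, this] with y hy hy2
        exact hy hy2
    filter_upwards [he2, ha.eventually_analyticAt] with x hx hax
    have ht : Tendsto h (𝓝[≠] x) (𝓝 (h x)) := hax.continuousAt.tendsto.mono_left nhdsWithin_le_nhds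
    exact (ht.congr' hx.symm).limUnder_eq
  have hRd : Differentiable ℂ R := by
    intro z0
    obtain ⟨h, ha, he⟩ := hloc z0
    exact (ha.congr (hRloc z0 h ha he).symm).differentiableAt
  have hRH : ∀ z, D z ≠ 0 → R z = H z := by
    intro z hz
    exact (hRloc z H ((hG.analyticAt z).div (hD.analyticAt z) hz) EventuallyEq.rfl).eq_of_nhds
  have hRper : ∀ z w, w ∈ L.pp.lattice → R (z + w) = R z := by
    intro z w hw
    obtain ⟨h, ha, he⟩ := hloc z
    have e1 : R z = h z := (hRloc z h ha he).eq_of_nhds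
    have hs : (fun x : ℂ => x - w) (z + w) = z := by simp
    have ha' : AnalyticAt ℂ (fun x => h (x - w)) (z + w) := by
      have : AnalyticAt ℂ h ((fun x : ℂ => x - w) (z + w)) := by rw [hs]; exact ha
      exact this.comp (f := fun x : ℂ => x - w) (by fun_prop)
    have he' : H =ᶠ[𝓝[≠] (z + w)] fun x => h (x - w) := by
      have ht : Tendsto (fun x : ℂ => x - w) (𝓝[≠] (z + w)) (𝓝[≠] z) := by
        refine tendsto_nhdsWithin_iff.mpr ⟨?_, ?_⟩
        · have : ContinuousAt (fun x : ℂ => x - w) (z + w) := by fun_prop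
          have h5 := this.tendsto
          rw [add_sub_cancel_right] at h5
          exact h5.mono_left nhdsWithin_le_nhds
        · filter_upwards [self_mem_nhdsWithin] with x hx
          intro hx2
          apply hx
          have : x - w = z := hx2
          simp [← this]
      filter_upwards [ht.eventually he] with x hx
      rw [← hx, ← hHper w hw (x - w), sub_add_cancel]
    rw [(hRloc _ _ ha' he').eq_of_nhds, e1]
    simp
  have hconst : R z = R z1 := hRd.apply_eq_apply_of_bounded
    (IsZLattice.isCompact_range_of_periodic L.pp.lattice _ hRd.continuous
      fun z w hw => hRper z w hw).isBounded z z1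
  by_cases h0 : D z = 0
  · exact (hz z h0).1
  · rw [hRH z h0, hRH z1 h1D] at hconst
    simp only [hH, h1G, zero_div] at hconst
    exact (div_eq_zero_iff.mp hconst).resolve_right h0

lemma chi_eq_aux (L : EllLattice) {a b : ℂ} (ha : a ∉ L.pp.lattice) (hb : b ∉ L.pp.lattice)
    (hab : a + b ∉ L.pp.lattice) (z : ℂ) :
    (L.zeta a + L.zeta b) * (L.sigma z * L.sigma (z + (a + b))) +
      deriv L.sigma z * L.sigma (z + (a + b)) - L.sigma z * deriv L.sigma (z + (a + b)) -
      L.sigma (a + b) / (L.sigma a * L.sigma b) * (L.sigma (z + b) * L.sigma (z + a)) = 0 := by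
  have sa := L.sigma_ne_zero ha
  have sb := L.sigma_ne_zero hb
  have sab := L.sigma_ne_zero hab
  have dS := L.sigma_differentiable
  have dS' : Differentiable ℂ (deriv L.sigma) := dS.deriv
  have dadd : ∀ (f : ℂ → ℂ) (c : ℂ), Differentiable ℂ f → Differentiable ℂ fun z => f (z + c) :=
    fun f c hf => hf.comp (differentiable_id.add_const c)
  have hDd : Differentiable ℂ (fun z => L.sigma z * L.sigma (z + (a + b))) :=
    dS.mul (dadd _ _ dS)
  have hder : ∀ z, deriv (fun z => L.sigma z * L.sigma (z + (a + b))) z =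
      deriv L.sigma z * L.sigma (z + (a + b)) + L.sigma z * deriv L.sigma (z + (a + b)) := by
    intro z
    exact ((dS z).hasDerivAt.mul ((dS _).hasDerivAt.comp_add_const z (a + b))).deriv
  refine L.liouville
    (fun z => (L.zeta a + L.zeta b) * (L.sigma z * L.sigma (z + (a + b))) +
      deriv L.sigma z * L.sigma (z + (a + b)) - L.sigma z * deriv L.sigma (z + (a + b)) -
      L.sigma (a + b) / (L.sigma a * L.sigma b) * (L.sigma (z + b) * L.sigma (z + a)))
    (fun z => L.sigma z * L.sigma (z + (a + b))) ?_ hDd ?_ ?_ (-a) ?_ ?_ z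
  · exact (((hDd.const_mul _).add (dS'.mul (dadd _ _ dS))).sub (dS.mul (dadd _ _ dS'))).sub
      (((dadd _ _ dS).mul (dadd _ _ dS)).const_mul _)
  · intro w hw
    obtain ⟨η, c, hc, -, hs⟩ := L.sigma_quasi hw
    refine ⟨fun z => c * Complex.exp (η * z) * (c * Complex.exp (η * (z + (a + b)))),
      fun z => ⟨?_, ?_, ?_⟩⟩
    · exact mul_ne_zero (mul_ne_zero hc (Complex.exp_ne_zero _))
        (mul_ne_zero hc (Complex.exp_ne_zero _))
    · simp only [add_right_comm z w, hs, L.deriv_sigma_add hs]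
      have : Complex.exp (η * (z + b)) * Complex.exp (η * (z + a)) =
        Complex.exp (η * z) * Complex.exp (η * (z + (a + b))) := by
        rw [← Complex.exp_add, ← Complex.exp_add]; ring_nf
      linear_combination (-(L.sigma (a + b) / (L.sigma a * L.sigma b)) * c ^ 2 *
        (L.sigma (z + b) * L.sigma (z + a))) * this
    · simp only [add_right_comm z w, hs]
      ring
  · intro z hz
    rw [hder]
    rcases mul_eq_zero.mp hz with h | h
    · have hm : z ∈ L.pp.lattice := by
        by_contra hn; exact L.sigma_ne_zero hn h
      obtain ⟨η, c, hc, -, hs⟩ := L.sigma_quasi hm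
      have e1 := hs (a + b)
      have e2 := hs a
      have e3 := hs b
      have e4 := L.deriv_sigma_add hs 0
      rw [L.deriv_sigma_zero, L.sigma_zero_of_mem (zero_mem _)] at e4
      simp only [zero_add, mul_zero, Complex.exp_zero, add_zero, mul_one] at e4
      rw [add_comm] at e1 e2 e3
      simp only [e1, e2, e3, e4, h]
      constructor
      · have : Complex.exp (η * (a + b)) = Complex.exp (η * a) * Complex.exp (η * b) := by
          rw [← Complex.exp_add]; ring_nf
        rw [this]
        field_simp
        ring
      · simp only [zero_mul, add_zero]
        exact mul_ne_zero hc (mul_ne_zero (mul_ne_zero hc (Complex.exp_ne_zero _)) sab)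
    · have hm : z + (a + b) ∈ L.pp.lattice := by
        by_contra hn; exact L.sigma_ne_zero hn h
      obtain ⟨η, c, hc, -, hs⟩ := L.sigma_quasi hm
      have e1 := hs (-(a + b))
      have e2 := hs (-a)
      have e3 := hs (-b)
      have e4 := L.deriv_sigma_add hs 0
      rw [L.deriv_sigma_zero, L.sigma_zero_of_mem (zero_mem _)] at e4
      simp only [zero_add, mul_zero, Complex.exp_zero, add_zero, mul_one] at e4
      rw [show -(a + b) + (z + (a + b)) = z by ring, L.sigma_neg] at e1
      rw [show -a + (z + (a + b)) = z + b by ring, L.sigma_neg] at e2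
      rw [show -b + (z + (a + b)) = z + a by ring, L.sigma_neg] at e3
      simp only [e1, e2, e3, e4, h]
      constructor
      · have : Complex.exp (η * -(a + b)) = Complex.exp (η * -a) * Complex.exp (η * -b) := by
          rw [← Complex.exp_add]; ring_nf
        rw [this]
        field_simp
        ring
      · simp only [mul_zero, zero_add]
        exact mul_ne_zero (mul_ne_zero (mul_ne_zero hc (Complex.exp_ne_zero _)) (neg_ne_zero.mpr sab)) hc
  · rw [show -a + (a + b) = b by ring, L.sigma_neg]
    exact mul_ne_zero (neg_ne_zero.mpr sa) sb
  · have h1 : deriv L.sigma (-a) = L.zeta a * L.sigma a := by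
      have := L.zeta_neg a
      unfold zeta at this ⊢
      rw [L.sigma_neg] at this
      field_simp at this ⊢
      linear_combination -this
    have h2 : deriv L.sigma b = L.zeta b * L.sigma b := by
      unfold zeta; field_simp
    simp only [show -a + (a + b) = b by ring, neg_add_cancel, L.sigma_neg, h1, h2,
      L.sigma_zero_of_mem (zero_mem _)]
    ring

/-- `ζ(a)+ζ(b)+ζ(c)-ζ(a+b+c)` in factorized form. -/
lemma zeta_add (L : EllLattice) {a b c : ℂ} (ha : ¬ L.mem a) (hb : ¬ L.mem b)
    (hc : ¬ L.mem c) (hab : ¬ L.mem (a + b)) (habc : ¬ L.mem (a + b + c)) :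
    (L.zeta a + L.zeta b + L.zeta c - L.zeta (a + b + c)) *
      (L.sigma a * L.sigma b * L.sigma c * L.sigma (a + b + c)) =
      L.sigma (a + b) * L.sigma (b + c) * L.sigma (a + c) := by
  rw [mem_iff] at *
  have h := L.chi_eq_aux ha hb hab c
  have sa := L.sigma_ne_zero ha
  have sb := L.sigma_ne_zero hb
  have sc := L.sigma_ne_zero hc
  have sabc := L.sigma_ne_zero habc
  have h1 : deriv L.sigma c = L.zeta c * L.sigma c := by
    unfold zeta; field_simp
  have h2 : deriv L.sigma (a + b + c) = L.zeta (a + b + c) * L.sigma (a + b + c) := by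
    unfold zeta; field_simp
  rw [add_comm c (a + b), add_comm c a, add_comm c b, h1, h2] at h
  field_simp at h
  linear_combination h

end EllLattice

namespace EllLattice

lemma sigma_ne (L : EllLattice) {z : ℂ} (hz : ¬ L.mem z) : L.sigma z ≠ 0 :=
  L.sigma_ne_zero (by rwa [mem_iff] at hz)

lemma mem_neg_iff (L : EllLattice) {z : ℂ} : L.mem (-z) ↔ L.mem z := by
  rw [mem_iff, mem_iff, neg_mem_iff]

lemma sigma_three (L : EllLattice) {a b c d : ℂ} (ha : ¬ L.mem a) (hb : ¬ L.mem b)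
    (hc : ¬ L.mem c) (hd : ¬ L.mem d) (hab : ¬ L.mem (a + b)) (habc : ¬ L.mem (a + b + c))
    (habcd : ¬ L.mem (a + b + c + d)) (hbc : ¬ L.mem (b + c)) (hbcd : ¬ L.mem (b + c + d)) :
    L.sigma (a + b) * L.sigma (a + c) * L.sigma d * L.sigma (b + c + d) -
      L.sigma (a + b + c + d) * L.sigma (d - a) * L.sigma b * L.sigma c =
    L.sigma (c + d) * L.sigma (b + d) * L.sigma a * L.sigma (a + b + c) := by
  have h1 := L.zeta_add ha hb hc hab habc
  have h2 := L.zeta_add (c := -a) habc hd (by rwa [mem_neg_iff]) habcd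
    (by convert hbcd using 2; ring)
  have h3 := L.zeta_add hb hc hd hbc hbcd
  rw [show a + b + c + d + -a = b + c + d by ring, show d + -a = d - a by ring,
    show a + b + c + -a = b + c by ring, L.sigma_neg, L.zeta_neg] at h2
  have sa := L.sigma_ne ha
  have sb := L.sigma_ne hb
  have sc := L.sigma_ne hc
  have sd := L.sigma_ne hd
  have sbc := L.sigma_ne hbc
  have sabc := L.sigma_ne habc
  have sbcd := L.sigma_ne hbcd
  apply mul_left_cancel₀ sbc
  linear_combination -(L.sigma d * L.sigma (b + c + d)) * h1 +
    (L.sigma b * L.sigma c) * h2 + (L.sigma a * L.sigma (a + b + c)) * h3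

/-- The key elliptic identity. -/
lemma Phi_three (L : EllLattice) {κ κ' ξ d : ℂ} (ha : ¬ L.mem κ) (hb : ¬ L.mem ξ)
    (hc : ¬ L.mem κ') (hd : ¬ L.mem d) (hab : ¬ L.mem (κ + ξ)) (habc : ¬ L.mem (κ + ξ + κ'))
    (habcd : ¬ L.mem (κ + ξ + κ' + d)) (hbc : ¬ L.mem (ξ + κ')) (hbcd : ¬ L.mem (ξ + κ' + d))
    (hbd : ¬ L.mem (ξ + d)) (hac : ¬ L.mem (κ + κ')) :
    L.Phi (ξ + d) (κ + κ') * L.Phi d (-κ) =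
      L.Phi ξ (κ + κ') * L.Phi d κ' - L.Phi (ξ + d) κ' * L.Phi ξ κ := by
  have h := L.sigma_three ha hb hc hd hab habc habcd hbc hbcd
  have sa := L.sigma_ne ha
  have sb := L.sigma_ne hb
  have sc := L.sigma_ne hc
  have sd := L.sigma_ne hd
  have sbd := L.sigma_ne hbd
  have sac := L.sigma_ne hac
  unfold Phi
  rw [L.sigma_neg, show ξ + d + (κ + κ') = κ + ξ + κ' + d by ring, ← sub_eq_add_neg,
    show ξ + (κ + κ') = κ + ξ + κ' by ring, show ξ + d + κ' = ξ + κ' + d by ring,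
    show d + κ' = κ' + d by ring, show ξ + κ = κ + ξ by ring]
  field_simp
  linear_combination h

lemma Phi_chi (L : EllLattice) {α κ ξ : ℂ} (ha : ¬ L.mem α) (hk : ¬ L.mem κ)
    (hx : ¬ L.mem ξ) (hak : ¬ L.mem (α + κ)) (h3 : ¬ L.mem (α + κ + ξ)) :
    L.Phi ξ α * L.Phi ξ κ =
      L.Phi ξ (α + κ) * (L.zeta α + L.zeta κ + L.zeta ξ - L.zeta (ξ + α + κ)) := by
  have h := L.zeta_add ha hk hx hak h3
  have s1 := L.sigma_ne ha
  have s2 := L.sigma_ne hk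
  have s3 := L.sigma_ne hx
  have s4 := L.sigma_ne hak
  have s5 := L.sigma_ne h3
  unfold Phi
  rw [show ξ + (α + κ) = α + κ + ξ by ring, show ξ + α + κ = α + κ + ξ by ring,
    show ξ + α = α + ξ by ring, show ξ + κ = κ + ξ by ring]
  field_simp
  linear_combination -h

lemma Phi_sum (L : EllLattice) {α x y : ℂ} (ha : ¬ L.mem α) (hx : ¬ L.mem x)
    (hy : ¬ L.mem y) (hxy : ¬ L.mem (x + y)) (h3 : ¬ L.mem (x + y + α)) :
    L.Phi x α * L.Phi y α =
      L.Phi (x + y) α * (L.zeta x + L.zeta y + L.zeta α - L.zeta (x + y + α)) := by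
  have h := L.zeta_add hx hy ha hxy h3
  have s1 := L.sigma_ne ha
  have s2 := L.sigma_ne hx
  have s3 := L.sigma_ne hy
  have s4 := L.sigma_ne hxy
  unfold Phi
  field_simp
  linear_combination -h

lemma Phi_r (L : EllLattice) {κ ξ d : ℂ} (hk : ¬ L.mem κ) (hx : ¬ L.mem ξ)
    (hd : ¬ L.mem d) (hdk : ¬ L.mem (d - κ)) (hxd : ¬ L.mem (ξ + d)) (hxk : ¬ L.mem (ξ + κ))
    (hxdk : ¬ L.mem (ξ + d + κ)) :
    L.Phi (ξ + d) κ * L.Phi d (-κ) =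
      L.Phi ξ κ * (L.zeta d - L.zeta (ξ + d) + (L.zeta (ξ + κ) - L.zeta κ)) := by
  have hd' : ¬ L.mem (-κ) := by rwa [mem_neg_iff]
  have h := L.zeta_add (a := d) (b := -κ) (c := ξ + κ) hd hd' hxk
    (by rwa [← sub_eq_add_neg]) (by convert hxd using 2; ring)
  rw [show d + -κ + (ξ + κ) = ξ + d by ring, show -κ + (ξ + κ) = ξ by ring,
    show d + (ξ + κ) = ξ + d + κ by ring, L.sigma_neg, L.zeta_neg] at h
  have s1 := L.sigma_ne hk
  have s2 := L.sigma_ne hx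
  have s3 := L.sigma_ne hd
  have s4 := L.sigma_ne hxd
  have s5 := L.sigma_ne hxk
  unfold Phi
  rw [L.sigma_neg]
  field_simp
  linear_combination h

lemma Phi_ne (L : EllLattice) {x y : ℂ} (hx : ¬ L.mem x) (hy : ¬ L.mem y)
    (hxy : ¬ L.mem (x + y)) : L.Phi x y ≠ 0 := by
  unfold Phi
  exact div_ne_zero (L.sigma_ne hxy) (mul_ne_zero (L.sigma_ne hx) (L.sigma_ne hy))

end EllLattice

namespace KPData

variable {N N' : ℕ}

/-- State of the system at a lattice point. -/
@[ext] structure St (N N' : ℕ) where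
  x : ℂ
  p : Fin N → ℂ
  q : Fin N' → ℂ

/-- Shift of a state in the direction `d`. -/
def shift (D : KPData N N') (d : ℂ) (S : St N N') : St N N' where
  x := S.x + d
  p := fun i => S.p i * D.L.Phi d (-(D.κ i))
  q := fun j => S.q j / D.L.Phi d (D.κ' j)

lemma shift_comm (D : KPData N N') (d e : ℂ) (S : St N N') :
    D.shift d (D.shift e S) = D.shift e (D.shift d S) := by
  ext
  · simp only [shift]; ring
  · simp only [shift]; ring
  · simp only [shift]; ring

def sM (D : KPData N N') (S : St N N') : Matrix (Fin N) (Fin N') ℂ :=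
  Matrix.of fun i j => S.p i * D.L.Phi S.x (D.κ i + D.κ' j) * S.q j

def sr (D : KPData N N') (S : St N N') : Fin N → ℂ := fun i => S.p i * D.L.Phi S.x (D.κ i)

def szr (D : KPData N N') (S : St N N') : Fin N → ℂ :=
  fun i => (D.L.zeta (S.x + D.κ i) - D.L.zeta (D.κ i)) * D.sr S i

def ss (D : KPData N N') (S : St N N') : Fin N' → ℂ := fun j => S.q j * D.L.Phi S.x (D.κ' j)

def sa (D : KPData N N') (α : ℂ) (S : St N N') : Fin N → ℂ :=
  fun i => S.p i * D.L.Phi S.x (D.κ i + α)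

def sA (D : KPData N N') (S : St N N') : Matrix (Fin N) (Fin N) ℂ := 1 + D.sM S * D.C

def sb (D : KPData N N') (S : St N N') : Fin N → ℂ := D.ss S ᵥ* D.C

def su (D : KPData N N') (α : ℂ) (S : St N N') : Fin N → ℂ := (D.sA S)⁻¹ *ᵥ D.sa α S

def su0 (D : KPData N N') (S : St N N') : Fin N → ℂ := (D.sA S)⁻¹ *ᵥ D.sr S

def sV (D : KPData N N') (α : ℂ) (S : St N N') : ℂ :=
  D.L.Phi S.x α - D.sb S ⬝ᵥ D.su α S

def sG (D : KPData N N') (d : ℂ) (S : St N N') : ℂ :=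
  D.L.zeta d - D.L.zeta (S.x + d) + D.sb (D.shift d S) ⬝ᵥ D.su0 (D.shift d S)

/-- The nondegeneracy conditions used for one shift. -/
structure Nice (D : KPData N N') (α ξ d : ℂ) : Prop where
  a : ¬ D.L.mem α
  d0 : ¬ D.L.mem d
  x : ¬ D.L.mem ξ
  k : ∀ i, ¬ D.L.mem (D.κ i)
  l : ∀ j, ¬ D.L.mem (D.κ' j)
  xd : ¬ D.L.mem (ξ + d)
  kx : ∀ i, ¬ D.L.mem (D.κ i + ξ)
  xl : ∀ j, ¬ D.L.mem (ξ + D.κ' j)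
  xa : ¬ D.L.mem (ξ + α)
  kl : ∀ i j, ¬ D.L.mem (D.κ i + D.κ' j)
  ka : ∀ i, ¬ D.L.mem (D.κ i + α)
  kxl : ∀ i j, ¬ D.L.mem (D.κ i + ξ + D.κ' j)
  kxa : ∀ i, ¬ D.L.mem (D.κ i + ξ + α)
  kxld : ∀ i j, ¬ D.L.mem (D.κ i + ξ + D.κ' j + d)
  kxad : ∀ i, ¬ D.L.mem (D.κ i + ξ + α + d)
  xld : ∀ j, ¬ D.L.mem (ξ + D.κ' j + d)
  xad : ¬ D.L.mem (ξ + α + d)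
  dk : ∀ i, ¬ D.L.mem (d - D.κ i)
  dl : ∀ j, ¬ D.L.mem (d + D.κ' j)
  xdk : ∀ i, ¬ D.L.mem (ξ + d + D.κ i)

lemma sM_shift (D : KPData N N') {α d : ℂ} {S : St N N'} (h : D.Nice α S.x d) :
    D.sM (D.shift d S) = D.sM S - Matrix.vecMulVec (D.sr S) (D.ss (D.shift d S)) := by
  ext i j
  have h1 := D.L.Phi_three (h.k i) h.x (h.l j) h.d0 (h.kx i) (h.kxl i j) (h.kxld i j) (h.xl j)
    (h.xld j) h.xd (h.kl i j)
  have h2 := D.L.Phi_ne h.d0 (h.l j) (h.dl j)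
  simp only [sM, sr, ss, shift, Matrix.sub_apply, Matrix.of_apply, Matrix.vecMulVec_apply]
  field_simp
  linear_combination S.p i * S.q j * h1

lemma sA_shift (D : KPData N N') {α d : ℂ} {S : St N N'} (h : D.Nice α S.x d) :
    D.sA (D.shift d S) = D.sA S - Matrix.vecMulVec (D.sr S) (D.sb (D.shift d S)) := by
  unfold sA sb
  rw [D.sM_shift h, Matrix.sub_mul, Matrix.vecMulVec_mul, add_sub_assoc]

lemma sa_shift (D : KPData N N') {α d : ℂ} {S : St N N'} (h : D.Nice α S.x d) :
    D.sa α (D.shift d S) = D.L.Phi d α • D.sa α S - D.L.Phi (S.x + d) α • D.sr S := by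
  ext i
  have h1 := D.L.Phi_three (h.k i) h.x h.a h.d0 (h.kx i) (h.kxa i) (h.kxad i) h.xa
    h.xad h.xd (h.ka i)
  simp only [sa, sr, shift, Pi.sub_apply, Pi.smul_apply, smul_eq_mul]
  linear_combination S.p i * h1

lemma sr_shift (D : KPData N N') {α d : ℂ} {S : St N N'} (h : D.Nice α S.x d) :
    D.sr (D.shift d S) = D.szr S + (D.L.zeta d - D.L.zeta (S.x + d)) • D.sr S := by
  ext i
  have h1 := D.L.Phi_r (h.k i) h.x h.d0 (h.dk i) h.xd (by rw [add_comm]; exact h.kx i) (h.xdk i)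
  simp only [szr, sr, shift, Pi.add_apply, Pi.smul_apply, smul_eq_mul]
  linear_combination S.p i * h1

lemma su_shift (D : KPData N N') {α d : ℂ} {S : St N N'} (h : D.Nice α S.x d)
    (hS : IsUnit (D.sA S).det) (hT : IsUnit (D.sA (D.shift d S)).det) :
    D.su α (D.shift d S) = D.L.Phi d α • D.su α S - D.sV α (D.shift d S) • D.su0 S := by
  have h1 : D.sA (D.shift d S) *ᵥ D.su α (D.shift d S) = D.sa α (D.shift d S) := by
    unfold su
    rw [Matrix.mulVec_mulVec, Matrix.mul_nonsing_inv _ hT, Matrix.one_mulVec]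
  have h2 : D.sA S *ᵥ D.su α (D.shift d S) =
      D.L.Phi d α • D.sa α S - D.sV α (D.shift d S) • D.sr S := by
    rw [D.sA_shift h, D.sa_shift h, Matrix.sub_mulVec, Matrix.vecMulVec_mulVec] at h1
    ext i
    have := congrFun h1 i
    simp only [Pi.sub_apply, Pi.smul_apply, smul_eq_mul, MulOpposite.smul_eq_mul_unop,
      MulOpposite.unop_op] at this ⊢
    unfold sV
    simp only [shift] at this ⊢
    linear_combination this
  have h3 : D.su α (D.shift d S) = (D.sA S)⁻¹ *ᵥ (D.sA S *ᵥ D.su α (D.shift d S)) := by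
    rw [Matrix.mulVec_mulVec, Matrix.nonsing_inv_mul _ hS, Matrix.one_mulVec]
  rw [h3, h2, Matrix.mulVec_sub, Matrix.mulVec_smul, Matrix.mulVec_smul]
  rfl

lemma su0_shift (D : KPData N N') {α d : ℂ} {S : St N N'} (h : D.Nice α S.x d)
    (hS : IsUnit (D.sA S).det) (hT : IsUnit (D.sA (D.shift d S)).det) :
    D.su0 (D.shift d S) = (D.sA S)⁻¹ *ᵥ D.szr S + D.sG d S • D.su0 S := by
  have h1 : D.sA (D.shift d S) *ᵥ D.su0 (D.shift d S) = D.sr (D.shift d S) := by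
    unfold su0
    rw [Matrix.mulVec_mulVec, Matrix.mul_nonsing_inv _ hT, Matrix.one_mulVec]
  have h2 : D.sA S *ᵥ D.su0 (D.shift d S) = D.szr S + D.sG d S • D.sr S := by
    rw [D.sA_shift h, D.sr_shift h, Matrix.sub_mulVec, Matrix.vecMulVec_mulVec] at h1
    ext i
    have := congrFun h1 i
    simp only [Pi.sub_apply, Pi.add_apply, Pi.smul_apply, smul_eq_mul,
      MulOpposite.smul_eq_mul_unop, MulOpposite.unop_op] at this ⊢
    unfold sG
    linear_combination this
  have h3 : D.su0 (D.shift d S) = (D.sA S)⁻¹ *ᵥ (D.sA S *ᵥ D.su0 (D.shift d S)) := by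
    rw [Matrix.mulVec_mulVec, Matrix.nonsing_inv_mul _ hS, Matrix.one_mulVec]
  rw [h3, h2, Matrix.mulVec_add, Matrix.mulVec_smul]
  rfl

lemma pair (D : KPData N N') {α d e : ℂ} {S : St N N'} (hp : ∀ i, S.p i ≠ 0)
    (hd : D.Nice α S.x d) (he : D.Nice α S.x e)
    (hde : D.Nice α (S.x + d) e) (hed : D.Nice α (S.x + e) d)
    (hS : IsUnit (D.sA S).det) (hT : IsUnit (D.sA (D.shift d S)).det)
    (hU : IsUnit (D.sA (D.shift e S)).det)
    (hW : IsUnit (D.sA (D.shift e (D.shift d S))).det) :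
    D.L.Phi d α * D.sV α (D.shift e S) - D.L.Phi e α * D.sV α (D.shift d S) =
      D.sV α (D.shift e (D.shift d S)) * (D.sG d S - D.sG e S) := by
  rcases Nat.eq_zero_or_pos N with rfl | hN
  · have h1 := D.L.Phi_sum hd.a hd.d0 he.xd (by convert hed.xd using 2; ring)
      (by convert hed.xad using 2; ring)
    have h2 := D.L.Phi_sum hd.a he.d0 hd.xd (by convert hde.xd using 2; ring)
      (by convert hde.xad using 2; ring)
    simp only [sV, sG, shift, dotProduct, Finset.univ_eq_empty, Finset.sum_empty, sub_zero,
      add_zero]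
    rw [show d + (S.x + e) = S.x + d + e by ring] at h1
    rw [show e + (S.x + d) = S.x + d + e by ring] at h2
    linear_combination h1 - h2
  · have e1 := D.su_shift (S := D.shift d S) hde hT hW
    rw [D.su_shift hd hS hT, D.su0_shift hd hS hT] at e1
    have e2 := D.su_shift (S := D.shift e S) hed hU (by rwa [shift_comm])
    rw [D.su_shift he hS hU, D.su0_shift he hS hU, D.shift_comm d e] at e2
    rw [e1] at e2
    have hr : D.sr S ⟨0, hN⟩ ≠ 0 :=
      mul_ne_zero (hp _) (D.L.Phi_ne hd.x (hd.k _) (by rw [add_comm]; exact hd.kx _))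
    have hu : D.su0 S ≠ 0 := by
      intro h0
      apply hr
      have : D.sA S *ᵥ D.su0 S = D.sr S := by
        unfold su0
        rw [Matrix.mulVec_mulVec, Matrix.mul_nonsing_inv _ hS, Matrix.one_mulVec]
      rw [← this, h0, Matrix.mulVec_zero]
      rfl
    obtain ⟨i, hi⟩ := Function.ne_iff.mp hu
    have e3 := congrFun e2 i
    simp only [Pi.sub_apply, Pi.add_apply, Pi.smul_apply, smul_eq_mul, Pi.zero_apply] at e3 hi
    apply mul_right_cancel₀ hi
    linear_combination e3

/-- The state of the lattice point `(n,m,h)`. -/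
def st (D : KPData N N') (n m h : ℤ) : St N N' where
  x := D.xi n m h
  p := fun i => D.L.Phi D.del (-(D.κ i)) ^ n * D.L.Phi D.eps (-(D.κ i)) ^ m *
    D.L.Phi D.lam (-(D.κ i)) ^ h * D.ρ0 i
  q := fun j => D.L.Phi D.del (D.κ' j) ^ (-n) * D.L.Phi D.eps (D.κ' j) ^ (-m) *
    D.L.Phi D.lam (D.κ' j) ^ (-h) * D.ν0 j

lemma exp_Psi (L : EllLattice) (x κ : ℂ) :
    Complex.exp (L.zeta x * κ) * L.Psi x κ = L.Phi x κ := by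
  unfold EllLattice.Psi
  rw [mul_left_comm, ← Complex.exp_add]
  simp

lemma exp_Psi' (L : EllLattice) (x κ : ℂ) :
    Complex.exp (-(L.zeta x) * κ) * L.Psi x (-κ) = L.Phi x (-κ) := by
  rw [← exp_Psi]
  congr 2
  ring

lemma rho_eq (D : KPData N N') (i : Fin N) (n m h : ℤ) :
    D.ρ i n m h = (D.st n m h).p i * Complex.exp (D.L.zeta (D.xi n m h) * D.κ i) := by
  simp only [ρ, st, exp_Psi']
  ring

lemma nu_eq (D : KPData N N') (j : Fin N') (n m h : ℤ) :
    D.ν j n m h = (D.st n m h).q j * Complex.exp (D.L.zeta (D.xi n m h) * D.κ' j) := by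
  simp only [ν, st, exp_Psi]
  ring

lemma r_eq (D : KPData N N') (n m h : ℤ) : D.r n m h = D.sr (D.st n m h) := by
  ext i
  simp only [r, sr, rho_eq]
  rw [mul_assoc, exp_Psi]
  rfl

lemma s_eq (D : KPData N N') (n m h : ℤ) : D.s n m h = D.ss (D.st n m h) := by
  ext i
  simp only [s, ss, nu_eq]
  rw [mul_assoc, exp_Psi]
  rfl

lemma M_eq (D : KPData N N') (n m h : ℤ) : D.M n m h = D.sM (D.st n m h) := by
  ext i j
  simp only [M, sM, rho_eq, nu_eq, Matrix.of_apply]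
  have e := exp_Psi D.L (D.xi n m h) (D.κ i + D.κ' j)
  rw [mul_add, Complex.exp_add] at e
  have e2 : (D.st n m h).x = D.xi n m h := rfl
  rw [e2, ← e]
  ring

lemma calV_eq (D : KPData N N') {α d : ℂ} {n m h : ℤ} (hN : D.Nice α (D.xi n m h) d)
    (hInv : IsUnit ((1 + D.M n m h * D.C).det))
    (hχα : ∀ i : Fin N, D.L.chi α (D.κ i) (D.xi n m h) ≠ 0) :
    D.calV α n m h = D.sV α (D.st n m h) := by
  have hdet : IsUnit (D.DK α n m h).det := by
    unfold DK
    rw [Matrix.det_diagonal, isUnit_iff_ne_zero]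
    exact Finset.prod_ne_zero_iff.mpr fun i _ => hχα i
  have h1 : D.DK α n m h *ᵥ D.sa α (D.st n m h) = D.L.Phi (D.xi n m h) α • D.r n m h := by
    rw [r_eq]
    ext i
    have := D.L.Phi_chi hN.a (hN.k i) hN.x (by rw [add_comm]; exact hN.ka i)
      (by convert hN.kxa i using 2; ring)
    simp only [DK, Matrix.mulVec_diagonal, sa, sr, Pi.smul_apply, smul_eq_mul,
      EllLattice.chi]
    have e2 : (D.st n m h).x = D.xi n m h := rfl
    rw [e2, add_comm (D.κ i) α]
    linear_combination -(D.st n m h).p i * this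
  have h2 : D.L.Phi (D.xi n m h) α • ((D.DK α n m h)⁻¹ *ᵥ D.r n m h) = D.sa α (D.st n m h) := by
    rw [← Matrix.mulVec_smul, ← h1, Matrix.mulVec_mulVec, Matrix.nonsing_inv_mul _ hdet,
      Matrix.one_mulVec]
  have hInv2 : IsUnit ((1 + D.C * D.M n m h).det) := by
    rwa [Matrix.det_one_add_mul_comm]
  have h3 : (1 + D.C * D.M n m h)⁻¹ * D.C = D.C * (1 + D.M n m h * D.C)⁻¹ := by
    have e : D.C * (1 + D.M n m h * D.C) = (1 + D.C * D.M n m h) * D.C := by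
      rw [Matrix.mul_add, Matrix.add_mul, Matrix.mul_one, Matrix.one_mul, Matrix.mul_assoc]
    calc (1 + D.C * D.M n m h)⁻¹ * D.C
        = (1 + D.C * D.M n m h)⁻¹ * (D.C * (1 + D.M n m h * D.C)) *
            (1 + D.M n m h * D.C)⁻¹ := by
          rw [Matrix.mul_assoc, Matrix.mul_assoc, Matrix.mul_nonsing_inv _ hInv, Matrix.mul_one]
      _ = _ := by
          rw [e, ← Matrix.mul_assoc, Matrix.nonsing_inv_mul _ hInv2, Matrix.one_mul]
  unfold calV V sV su sb sA
  rw [mul_sub, mul_one, ← M_eq, ← s_eq, ← h2]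
  have e2 : (D.st n m h).x = D.xi n m h := rfl
  rw [e2, ← Matrix.dotProduct_mulVec, Matrix.mulVec_smul, Matrix.mulVec_smul,
    dotProduct_smul, smul_eq_mul, Matrix.mulVec_mulVec _ _ D.C, h3, ← Matrix.mulVec_mulVec]

section gen

variable {D : KPData N N'} {α : ℂ}

lemma gen1 (hg : D.Generic ![α]) (c0 cn cm ch t : ℤ)
    (hne : ¬ (c0 = 0 ∧ cn = 0 ∧ cm = 0 ∧ ch = 0 ∧ t = 0)) :
    ¬ D.L.mem (c0 • D.xi0 + cn • D.del + cm • D.eps + ch • D.lam + t • α) := by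
  have := hg c0 cn cm ch 0 0 ![t] (by
    rintro ⟨h1, h2, h3, h4, -, -, h5⟩
    exact hne ⟨h1, h2, h3, h4, by simpa using congrFun h5 0⟩)
  simpa using this

lemma gen2 (hg : D.Generic ![α]) (i : Fin N) (c0 cn cm ch k t : ℤ)
    (hne : ¬ (c0 = 0 ∧ cn = 0 ∧ cm = 0 ∧ ch = 0 ∧ k = 0 ∧ t = 0)) :
    ¬ D.L.mem (c0 • D.xi0 + cn • D.del + cm • D.eps + ch • D.lam + k • D.κ i + t • α) := by
  have := hg c0 cn cm ch (Pi.single i k) 0 ![t] (by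
    rintro ⟨h1, h2, h3, h4, h6, -, h5⟩
    exact hne ⟨h1, h2, h3, h4, by simpa using congrFun h6 i, by simpa using congrFun h5 0⟩)
  rw [Finset.sum_eq_single i (by intro b _ hb; simp [Pi.single_eq_of_ne hb]) (by simp)] at this
  simpa using this

lemma gen3 (hg : D.Generic ![α]) (j : Fin N') (c0 cn cm ch k : ℤ)
    (hne : ¬ (c0 = 0 ∧ cn = 0 ∧ cm = 0 ∧ ch = 0 ∧ k = 0)) :
    ¬ D.L.mem (c0 • D.xi0 + cn • D.del + cm • D.eps + ch • D.lam + k • D.κ' j) := by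
  have := hg c0 cn cm ch 0 (Pi.single j k) 0 (by
    rintro ⟨h1, h2, h3, h4, -, h6, -⟩
    exact hne ⟨h1, h2, h3, h4, by simpa using congrFun h6 j⟩)
  rw [Finset.sum_eq_single (s := Finset.univ) (f := fun j' => (Pi.single j k : Fin N' → ℤ) j' • D.κ' j')
    j (by intro b _ hb; simp [Pi.single_eq_of_ne hb]) (by simp)] at this
  simpa using this

lemma gen4 (hg : D.Generic ![α]) (i : Fin N) (j : Fin N') (c0 cn cm ch : ℤ) :
    ¬ D.L.mem (c0 • D.xi0 + cn • D.del + cm • D.eps + ch • D.lam + D.κ i + D.κ' j) := by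
  have := hg c0 cn cm ch (Pi.single i 1) (Pi.single j 1) 0 (by
    rintro ⟨h1, h2, h3, h4, h7, h6, -⟩
    simpa using congrFun h6 j)
  rw [Finset.sum_eq_single (s := Finset.univ) (f := fun j' => (Pi.single j 1 : Fin N' → ℤ) j' • D.κ' j')
    j (by intro b _ hb; simp [Pi.single_eq_of_ne hb]) (by simp),
    Finset.sum_eq_single (s := Finset.univ) (f := fun j' => (Pi.single i 1 : Fin N → ℤ) j' • D.κ j')
    i (by intro b _ hb; simp [Pi.single_eq_of_ne hb]) (by simp)] at this
  simpa using this

lemma nice (hg : D.Generic ![α]) (n m h cn cm ch : ℤ) (hne : ¬ (cn = 0 ∧ cm = 0 ∧ ch = 0))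
    {x d : ℂ} (hx : x = D.xi n m h)
    (hd : d = cn • D.del + cm • D.eps + ch • D.lam) : D.Nice α x d := by
  subst hx hd
  constructor
  · convert gen1 hg 0 0 0 0 1 (by simp) using 2; simp [xi]
  · convert gen1 hg 0 cn cm ch 0 (by simpa using hne) using 2; simp [xi]
  · convert gen1 hg 1 n m h 0 (by simp) using 2; simp [xi]
  · intro i; convert gen2 hg i 0 0 0 0 1 0 (by simp) using 2; simp [xi]
  · intro j; convert gen3 hg j 0 0 0 0 1 (by simp) using 2; simp [xi]
  · convert gen1 hg 1 (n + cn) (m + cm) (h + ch) 0 (by simp) using 2; simp [xi]; ring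
  · intro i; convert gen2 hg i 1 n m h 1 0 (by simp) using 2; simp [xi]; ring
  · intro j; convert gen3 hg j 1 n m h 1 (by simp) using 2; simp [xi]
  · convert gen1 hg 1 n m h 1 (by simp) using 2; simp [xi]
  · intro i j; convert gen4 hg i j 0 0 0 0 using 2; simp [xi]
  · intro i; convert gen2 hg i 0 0 0 0 1 1 (by simp) using 2; simp [xi]
  · intro i j; convert gen4 hg i j 1 n m h using 2; simp [xi]; ring
  · intro i; convert gen2 hg i 1 n m h 1 1 (by simp) using 2; simp [xi]; ring
  · intro i j; convert gen4 hg i j 1 (n + cn) (m + cm) (h + ch) using 2; simp [xi]; ring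
  · intro i; convert gen2 hg i 1 (n + cn) (m + cm) (h + ch) 1 1 (by simp) using 2; simp [xi]; ring
  · intro j; convert gen3 hg j 1 (n + cn) (m + cm) (h + ch) 1 (by simp) using 2; simp [xi]; ring
  · convert gen1 hg 1 (n + cn) (m + cm) (h + ch) 1 (by simp) using 2; simp [xi]; ring
  · intro i; convert gen2 hg i 0 cn cm ch (-1) 0 (by simp) using 2; simp [xi]; ring
  · intro j; convert gen3 hg j 0 cn cm ch 1 (by simp) using 2; simp [xi]
  · intro i; convert gen2 hg i 1 (n + cn) (m + cm) (h + ch) 1 0 (by simp) using 2; simp [xi]; ring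

lemma Nice.pne {ξ d : ℂ} (h : D.Nice α ξ d) (i : Fin N) : D.L.Phi d (-(D.κ i)) ≠ 0 :=
  D.L.Phi_ne h.d0 (by rw [EllLattice.mem_neg_iff]; exact h.k i)
    (by rw [← sub_eq_add_neg]; exact h.dk i)

lemma Nice.qne {ξ d : ℂ} (h : D.Nice α ξ d) (j : Fin N') : D.L.Phi d (D.κ' j) ≠ 0 :=
  D.L.Phi_ne h.d0 (h.l j) (h.dl j)

lemma st_del {ξ : ℂ} (hN : D.Nice α ξ D.del) (n m h : ℤ) :
    D.st (n + 1) m h = D.shift D.del (D.st n m h) := by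
  ext i
  · simp only [st, shift, xi, add_zsmul, one_zsmul]; ring
  · simp only [st, shift]; rw [zpow_add_one₀ (hN.pne i)]; ring
  · simp only [st, shift]
    rw [neg_add, zpow_add₀ (hN.qne i), _root_.zpow_neg_one]; ring

lemma st_eps {ξ : ℂ} (hN : D.Nice α ξ D.eps) (n m h : ℤ) :
    D.st n (m + 1) h = D.shift D.eps (D.st n m h) := by
  ext i
  · simp only [st, shift, xi, add_zsmul, one_zsmul]; ring
  · simp only [st, shift]; rw [zpow_add_one₀ (hN.pne i)]; ring
  · simp only [st, shift]
    rw [neg_add, zpow_add₀ (hN.qne i), _root_.zpow_neg_one]; ring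

lemma st_lam {ξ : ℂ} (hN : D.Nice α ξ D.lam) (n m h : ℤ) :
    D.st n m (h + 1) = D.shift D.lam (D.st n m h) := by
  ext i
  · simp only [st, shift, xi, add_zsmul, one_zsmul]; ring
  · simp only [st, shift]; rw [zpow_add_one₀ (hN.pne i)]; ring
  · simp only [st, shift]
    rw [neg_add, zpow_add₀ (hN.qne i), _root_.zpow_neg_one]; ring

end gen

end KPData


/-- Elliptic soliton solution of the lattice modified KP equation:
with `P_α = Φ_δ(α)`, `Q_α = Φ_ε(α)`, `L_α = Φ_λ(α)`, the gauge variable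
`𝒱_α = Φ_ξ(α)·V_α` satisfies
`(P𝒱̂ − Q𝒱̃)/𝒱̂̃ + (Q𝒱̄ − L𝒱̂)/𝒱̂̄ + (L𝒱̃ − P𝒱̄)/𝒱̃̄ = 0`. -/
theorem elliptic_soliton_lattice_mKP {N N' : ℕ} (D : KPData N N') (α : ℂ)
    (hρ0 : ∀ i, D.ρ0 i ≠ 0) (hν0 : ∀ j, D.ν0 j ≠ 0)
    (hgen : D.Generic ![α])
    (hInv : ∀ n m h : ℤ, IsUnit ((1 + D.M n m h * D.C).det))
    (hχα : ∀ (n m h : ℤ) (i : Fin N), D.L.chi α (D.κ i) (D.xi n m h) ≠ 0) :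
    ∀ n m h : ℤ,
      D.calV α (n + 1) (m + 1) h ≠ 0 →
      D.calV α n (m + 1) (h + 1) ≠ 0 →
      D.calV α (n + 1) m (h + 1) ≠ 0 →
      (D.L.Phi D.del α * D.calV α n (m + 1) h -
          D.L.Phi D.eps α * D.calV α (n + 1) m h) / D.calV α (n + 1) (m + 1) h +
      (D.L.Phi D.eps α * D.calV α n m (h + 1) -
          D.L.Phi D.lam α * D.calV α n (m + 1) h) / D.calV α n (m + 1) (h + 1) +
      (D.L.Phi D.lam α * D.calV α (n + 1) m h -
          D.L.Phi D.del α * D.calV α n m (h + 1)) / D.calV α (n + 1) m (h + 1) = 0 := by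
  intro n m h w1 w2 w3
  have nd : ∀ n m h : ℤ, D.Nice α (D.xi n m h) D.del := fun n m h =>
    KPData.nice hgen n m h 1 0 0 (by simp) rfl (by simp)
  have ne : ∀ n m h : ℤ, D.Nice α (D.xi n m h) D.eps := fun n m h =>
    KPData.nice hgen n m h 0 1 0 (by simp) rfl (by simp)
  have nl : ∀ n m h : ℤ, D.Nice α (D.xi n m h) D.lam := fun n m h =>
    KPData.nice hgen n m h 0 0 1 (by simp) rfl (by simp)
  have hV : ∀ n m h : ℤ, D.calV α n m h = D.sV α (D.st n m h) := fun n m h =>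
    D.calV_eq (nd n m h) (hInv n m h) (hχα n m h)
  have hA : ∀ n m h : ℤ, IsUnit (D.sA (D.st n m h)).det := fun n m h => by
    have := hInv n m h
    rw [D.M_eq] at this
    exact this
  have sd : ∀ n m h : ℤ, D.st (n + 1) m h = D.shift D.del (D.st n m h) :=
    KPData.st_del (nd 0 0 0)
  have se : ∀ n m h : ℤ, D.st n (m + 1) h = D.shift D.eps (D.st n m h) :=
    KPData.st_eps (ne 0 0 0)
  have sl : ∀ n m h : ℤ, D.st n m (h + 1) = D.shift D.lam (D.st n m h) :=
    KPData.st_lam (nl 0 0 0)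
  have xd : D.xi n m h + D.del = D.xi (n + 1) m h := by
    simp only [KPData.xi, add_zsmul, one_zsmul]; ring
  have xe : D.xi n m h + D.eps = D.xi n (m + 1) h := by
    simp only [KPData.xi, add_zsmul, one_zsmul]; ring
  have xl : D.xi n m h + D.lam = D.xi n m (h + 1) := by
    simp only [KPData.xi, add_zsmul, one_zsmul]; ring
  have hp : ∀ i, (D.st n m h).p i ≠ 0 := fun i =>
    mul_ne_zero (mul_ne_zero (mul_ne_zero (zpow_ne_zero _ ((nd 0 0 0).pne i))
      (zpow_ne_zero _ ((ne 0 0 0).pne i))) (zpow_ne_zero _ ((nl 0 0 0).pne i))) (hρ0 i)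
  have p1 := D.pair (d := D.del) (e := D.eps) hp (nd n m h) (ne n m h)
    (by rw [show (D.st n m h).x + D.del = D.xi (n + 1) m h from xd]; exact ne _ _ _)
    (by rw [show (D.st n m h).x + D.eps = D.xi n (m + 1) h from xe]; exact nd _ _ _)
    (hA n m h) (by rw [← sd]; exact hA _ _ _) (by rw [← se]; exact hA _ _ _)
    (by rw [← sd, ← se]; exact hA _ _ _)
  have p2 := D.pair (d := D.eps) (e := D.lam) hp (ne n m h) (nl n m h)
    (by rw [show (D.st n m h).x + D.eps = D.xi n (m + 1) h from xe]; exact nl _ _ _)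
    (by rw [show (D.st n m h).x + D.lam = D.xi n m (h + 1) from xl]; exact ne _ _ _)
    (hA n m h) (by rw [← se]; exact hA _ _ _) (by rw [← sl]; exact hA _ _ _)
    (by rw [← se, ← sl]; exact hA _ _ _)
  have p3 := D.pair (d := D.lam) (e := D.del) hp (nl n m h) (nd n m h)
    (by rw [show (D.st n m h).x + D.lam = D.xi n m (h + 1) from xl]; exact nd _ _ _)
    (by rw [show (D.st n m h).x + D.del = D.xi (n + 1) m h from xd]; exact nl _ _ _)
    (hA n m h) (by rw [← sl]; exact hA _ _ _) (by rw [← sd]; exact hA _ _ _)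
    (by rw [← sl, ← sd]; exact hA _ _ _)
  rw [← sd, ← se, ← se, ← hV, ← hV, ← hV] at p1
  rw [← se, ← sl, ← sl, ← hV, ← hV, ← hV] at p2
  rw [← sl, ← sd, ← sd, ← hV, ← hV, ← hV] at p3
  rw [p1, p2, p3, mul_div_cancel_left₀ _ w1, mul_div_cancel_left₀ _ w2,
    mul_div_cancel_left₀ _ w3]
  ring
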